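/- arXiv:2207.10483 — 5 statements merged into one kernel-verified Lean document; each statement's English description precedes it below -/
import Mathlib

section
/- Let H, G_1, …, G_r be finite simple graphs and q ≥ 1 an integer. If there is a cohomomorphism witnessing H̄ ⊗ Q_q ≤ ⊕_{d=1}^r Ḡ_d ⊗ Q_d, then already H̄ ⊗ Q_q ≤ ⊕_{d=q}^r Ḡ_d ⊗ Q_d, i.e. the direct sum on the right-hand side can be restricted to the summands with index d ≥ q. -/
open scoped Kronecker
open Matrix

namespace NCG

/-- Existence of a cohomomorphism from `T` to `S` (written `T ≤ S`). -/
def Cohom {A B : Type} [Fintype A] [DecidableEq A] [Fintype B] [DecidableEq B]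
    (T : Submodule ℂ (Matrix B B ℂ)) (S : Submodule ℂ (Matrix A A ℂ)) : Prop :=
  ∃ (k : ℕ) (E : Fin k → Matrix A B ℂ),
    (∑ i, (E i)ᴴ * E i) = 1 ∧ ∀ i j : Fin k, ∀ M ∈ S, (E i)ᴴ * M * E j ∈ T

/-- The noncommutative graph `Ḡ` of a classical graph `G`. -/
noncomputable def graphNC {V : Type} [Fintype V] [DecidableEq V] (G : SimpleGraph V) :
    Submodule ℂ (Matrix V V ℂ) :=
  Submodule.span ℂ {M | ∃ x y : V, (G.Adj x y ∨ x = y) ∧ M = Matrix.single x y 1}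

/-- The confusability graph `Q_d = ℂ·I_d` of the noiseless `d`-dimensional quantum channel. -/
noncomputable def qGraph (d : ℕ) : Submodule ℂ (Matrix (Fin d) (Fin d) ℂ) :=
  Submodule.span ℂ {(1 : Matrix (Fin d) (Fin d) ℂ)}

/-- Tensor product of noncommutative graphs. -/
noncomputable def ncTensor {A B : Type} [Fintype A] [DecidableEq A] [Fintype B] [DecidableEq B]
    (S : Submodule ℂ (Matrix A A ℂ)) (T : Submodule ℂ (Matrix B B ℂ)) :
    Submodule ℂ (Matrix (A × B) (A × B) ℂ) :=
  Submodule.span ℂ {M | ∃ X ∈ S, ∃ Y ∈ T, M = X ⊗ₖ Y}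

/-- Direct sum of a finite family of noncommutative graphs. -/
noncomputable def ncDirectSum {ι : Type} [Fintype ι] [DecidableEq ι] {V : ι → Type}
    [∀ i, Fintype (V i)] [∀ i, DecidableEq (V i)]
    (S : ∀ i, Submodule ℂ (Matrix (V i) (V i) ℂ)) :
    Submodule ℂ (Matrix (Σ i, V i) (Σ i, V i) ℂ) where
  carrier := {M | (∀ p q : Σ i, V i, p.1 ≠ q.1 → M p q = 0) ∧
    ∀ i, (Matrix.of fun x y : V i => M ⟨i, x⟩ ⟨i, y⟩) ∈ S i}
  add_mem' := by
    rintro a b ⟨ha1, ha2⟩ ⟨hb1, hb2⟩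
    refine ⟨fun p q h => ?_, fun i => ?_⟩
    · simp [Matrix.add_apply, ha1 p q h, hb1 p q h]
    · have h := (S i).add_mem (ha2 i) (hb2 i)
      exact h
  zero_mem' := by
    refine ⟨fun p q h => rfl, fun i => ?_⟩
    have h0 : (Matrix.of fun x y : V i =>
        (0 : Matrix (Σ j, V j) (Σ j, V j) ℂ) ⟨i, x⟩ ⟨i, y⟩) = 0 := rfl
    rw [h0]
    exact (S i).zero_mem
  smul_mem' := by
    rintro c a ⟨ha1, ha2⟩
    refine ⟨fun p q h => ?_, fun i => ?_⟩
    · simp [Matrix.smul_apply, ha1 p q h]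
    · have h := (S i).smul_mem c (ha2 i)
      exact h

/-- `⊕_{d=1}^r Ḡ_d ⊗ Q_d`, where `G d` plays the role of `G_{d+1}` for `d : Fin r`. -/
noncomputable def bigSum {r : ℕ} {V : Fin r → Type} [∀ d, Fintype (V d)] [∀ d, DecidableEq (V d)]
    (G : ∀ d, SimpleGraph (V d)) :
    Submodule ℂ (Matrix (Σ d : Fin r, V d × Fin (d.1 + 1))
      (Σ d : Fin r, V d × Fin (d.1 + 1)) ℂ) :=
  ncDirectSum fun d : Fin r => ncTensor (graphNC (G d)) (qGraph (d.1 + 1))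

/-- The diagonal blocks of an element of `T ⊗ Q_q` are scalar. -/
theorem exists_submatrix_eq_smul_one {A : Type} [Fintype A] [DecidableEq A]
    (T : Submodule ℂ (Matrix A A ℂ)) (q : ℕ) (h : A) {N : Matrix (A × Fin q) (A × Fin q) ℂ}
    (hN : N ∈ ncTensor T (qGraph q)) :
    ∃ c : ℂ, N.submatrix (Prod.mk h) (Prod.mk h) = c • (1 : Matrix (Fin q) (Fin q) ℂ) := by
  induction hN using Submodule.span_induction with
  | mem N hN =>
    obtain ⟨X, -, Y, hY, rfl⟩ := hN
    obtain ⟨c, rfl⟩ := Submodule.mem_span_singleton.1 hY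
    refine ⟨X h h * c, ?_⟩
    ext a b
    simp [mul_assoc]
  | zero => exact ⟨0, by ext; simp⟩
  | add M N _ _ hM hN =>
    obtain ⟨c, hc⟩ := hM
    obtain ⟨d, hd⟩ := hN
    exact ⟨c + d, by rw [submatrix_add, Pi.add_apply, Pi.add_apply, hc, hd, add_smul]⟩
  | smul a M _ hM =>
    obtain ⟨c, hc⟩ := hM
    exact ⟨a * c, by rw [submatrix_smul, Pi.smul_apply, Pi.smul_apply, hc, mul_smul]⟩

open scoped ComplexOrder in
/-- A matrix with fewer rows than columns and with scalar Gram matrix vanishes. -/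
theorem eq_zero_of_conjTranspose_mul_self_eq_smul_one {d q : ℕ} (hdq : d < q)
    (F : Matrix (Fin d) (Fin q) ℂ) {c : ℂ} (hF : Fᴴ * F = c • 1) : F = 0 := by
  obtain rfl | hc := eq_or_ne c 0
  · rwa [zero_smul, conjTranspose_mul_self_eq_zero] at hF
  · have hrank : (Fᴴ * F).rank = q := by
      rw [hF, rank_smul_of_mem_nonZeroDivisors _ (mem_nonZeroDivisors_of_ne_zero hc), rank_one,
        Fintype.card_fin]
    have hle : (Fᴴ * F).rank ≤ d := by
      simpa using (rank_mul_le_right Fᴴ F).trans (rank_le_card_height F)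
    omega

theorem diagonal_mem_graphNC {V : Type} [Fintype V] [DecidableEq V] (G : SimpleGraph V)
    (f : V → ℂ) : diagonal f ∈ graphNC G := by
  have hf : diagonal f = ∑ x, f x • Matrix.single x x (1 : ℂ) := by
    simp [← sum_single_eq_diagonal]
  rw [hf]
  exact Submodule.sum_mem _ fun x _ =>
    Submodule.smul_mem _ _ (Submodule.subset_span ⟨x, x, Or.inr rfl, rfl⟩)

/-- A diagonal matrix depending only on the classical labels lies in `⊕ Ḡ_d ⊗ Q_d`. -/
theorem diagonal_mem_bigSum
    {r : ℕ} {V : Fin r → Type} [∀ d, Fintype (V d)] [∀ d, DecidableEq (V d)]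
    (G : ∀ d, SimpleGraph (V d)) (f : (Σ d, V d) → ℂ) :
    diagonal (fun p : Σ d : Fin r, V d × Fin (d.1 + 1) => f ⟨p.1, p.2.1⟩) ∈ bigSum G := by
  refine ⟨fun p p' hp => diagonal_apply_ne _ fun h => hp (by rw [h]), fun i => ?_⟩
  refine Submodule.subset_span
    ⟨_, diagonal_mem_graphNC (G i) fun x => f ⟨i, x⟩, 1, Submodule.mem_span_singleton_self _, ?_⟩
  ext ⟨x, a⟩ ⟨y, b⟩
  by_cases hx : x = y <;> by_cases ha : a = b <;> simp [diagonal_apply, hx, ha]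

/-- The rows of a cohomomorphism lying in a summand with index smaller than `q` vanish. -/
theorem apply_eq_zero_of_small
    {r : ℕ} {V : Fin r → Type} [∀ d, Fintype (V d)] [∀ d, DecidableEq (V d)]
    (G : ∀ d, SimpleGraph (V d))
    {A : Type} [Fintype A] [DecidableEq A] (T : Submodule ℂ (Matrix A A ℂ)) (q : ℕ)
    (E : Matrix (Σ d : Fin r, V d × Fin (d.1 + 1)) (A × Fin q) ℂ)
    (hE : ∀ M ∈ bigSum G, Eᴴ * M * E ∈ ncTensor T (qGraph q))
    (p : Σ d : Fin r, V d × Fin (d.1 + 1)) (hp : p.1.1 + 1 < q) (b : A × Fin q) :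
    E p b = 0 := by
  obtain ⟨d, x, k⟩ := p
  obtain ⟨h, a⟩ := b
  let F : Matrix (Fin (d.1 + 1)) (Fin q) ℂ := of fun k a => E ⟨d, x, k⟩ (h, a)
  obtain ⟨c, hc⟩ := exists_submatrix_eq_smul_one T q h
    (hE _ (diagonal_mem_bigSum G (Pi.single ⟨d, x⟩ 1)))
  have hF : Fᴴ * F = c • 1 := by
    rw [← hc]
    ext a b
    rw [submatrix_apply, mul_apply, mul_apply, Fintype.sum_sigma,
      Fintype.sum_eq_single d, Fintype.sum_prod_type, Fintype.sum_eq_single x]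
    · simp [F]
    · intro y hy
      simp [Pi.single_apply, hy]
    · intro e he
      simp [Pi.single_apply, he]
  exact congr_fun₂ (eq_zero_of_conjTranspose_mul_self_eq_smul_one hp F hF) k a

/-- The inclusion of the index set of the summands selected by `P`. -/
def sigmaIncl {ι : Type} (P : ι → Prop) (W : ι → Type) (p : Σ i : {i // P i}, W i.1) :
    Σ i, W i := ⟨p.1.1, p.2⟩

theorem sigmaIncl_injective {ι : Type} (P : ι → Prop) (W : ι → Type) :
    Function.Injective (sigmaIncl P W) := by
  rintro ⟨⟨i, hi⟩, x⟩ ⟨⟨j, hj⟩, y⟩ h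
  obtain ⟨rfl, h⟩ := Sigma.mk.inj h
  obtain rfl := eq_of_heq h
  rfl

/-- An element of a partial direct sum extends by zero to the whole direct sum. -/
theorem exists_extension {ι : Type} [Fintype ι] [DecidableEq ι] (P : ι → Prop) [DecidablePred P]
    {W : ι → Type} [∀ i, Fintype (W i)] [∀ i, DecidableEq (W i)]
    (S : ∀ i, Submodule ℂ (Matrix (W i) (W i) ℂ))
    {M : Matrix (Σ i : {i // P i}, W i.1) (Σ i : {i // P i}, W i.1) ℂ}
    (hM : M ∈ ncDirectSum fun i : {i // P i} => S i.1) :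
    ∃ N ∈ ncDirectSum S, N.submatrix (sigmaIncl P W) (sigmaIncl P W) = M := by
  refine ⟨of fun p p' => if h : P p.1 ∧ P p'.1 then M ⟨⟨p.1, h.1⟩, p.2⟩ ⟨⟨p'.1, h.2⟩, p'.2⟩ else 0,
    ⟨fun p p' hp => ?_, fun i => ?_⟩, ?_⟩
  · rw [of_apply]
    split_ifs with h
    · exact hM.1 _ _ fun he => hp (congrArg Subtype.val he)
    · rfl
  · by_cases hi : P i
    · simpa [hi] using hM.2 ⟨i, hi⟩
    · simp only [of_apply, hi, false_and, dite_false]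
      exact (S i).zero_mem
  · ext ⟨⟨i, hi⟩, x⟩ ⟨⟨j, hj⟩, y⟩
    simp [sigmaIncl, hi, hj]

/-- Rows on which the right factor vanishes can be dropped from a matrix product. -/
theorem submatrix_mul_submatrix_of_forall_eq_zero {A B C D : Type} [Fintype A] [Fintype B]
    {e : B → A} (he : Function.Injective e) (X : Matrix C A ℂ) (Y : Matrix A D ℂ)
    (hY : ∀ p ∉ Set.range e, ∀ b, Y p b = 0) :
    X.submatrix id e * Y.submatrix e id = X * Y := by
  ext c b
  exact Fintype.sum_of_injective e he _ _ (fun p hp => by simp [hY p hp b]) fun p => rfl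

theorem restrict_to_large_summands
    {r : ℕ} {V : Fin r → Type} [∀ d, Fintype (V d)] [∀ d, DecidableEq (V d)]
    (G : ∀ d, SimpleGraph (V d))
    {VH : Type} [Fintype VH] [DecidableEq VH] (H : SimpleGraph VH)
    (q : ℕ) (hq : 1 ≤ q)
    (h : Cohom (ncTensor (graphNC H) (qGraph q)) (bigSum G)) :
    Cohom (ncTensor (graphNC H) (qGraph q))
      (ncDirectSum fun d : {d : Fin r // q ≤ d.1 + 1} =>
        ncTensor (graphNC (G d.1)) (qGraph (d.1.1 + 1))) := by
  obtain ⟨k, E, hE, hcohom⟩ := h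
  let P : Fin r → Prop := fun d => q ≤ d.1 + 1
  let W : Fin r → Type := fun d => V d × Fin (d.1 + 1)
  let e := sigmaIncl P W
  have he : Function.Injective e := sigmaIncl_injective P W
  have hzero : ∀ i, ∀ p ∉ Set.range e, ∀ b, E i p b = 0 := by
    intro i p hp b
    refine apply_eq_zero_of_small G _ q (E i) (hcohom i i) p ?_ b
    by_contra hlt
    exact hp ⟨⟨⟨p.1, not_lt.1 hlt⟩, p.2⟩, rfl⟩
  refine ⟨k, fun i => (E i).submatrix e id, ?_, fun i j M hM => ?_⟩
  · rw [← hE]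
    exact Finset.sum_congr rfl fun i _ =>
      submatrix_mul_submatrix_of_forall_eq_zero he (E i)ᴴ (E i) (hzero i)
  · obtain ⟨N, hN, rfl⟩ := exists_extension P
      (fun d : Fin r => ncTensor (graphNC (G d)) (qGraph (d.1 + 1))) hM
    convert hcohom i j N hN using 1
    have hright : N.submatrix e e * (E j).submatrix e id = (N * E j).submatrix e id := by
      rw [← submatrix_mul_submatrix_of_forall_eq_zero he N (E j) (hzero j)]
      rfl
    have hleft : ((E i).submatrix e id)ᴴ * (N * E j).submatrix e id = (E i)ᴴ * (N * E j) := by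
      ext a b
      exact Fintype.sum_of_injective e he _ _
        (fun p hp => by simp [hzero i p hp a]) fun p => rfl
    rw [Matrix.mul_assoc, Matrix.mul_assoc, ← hleft, ← hright]



end NCG
end

section
/- The fractional clique cover number χ̄_f admits no admissible exponent: for every real number α there exist finite simple graphs H_1, …, H_r and G_1, …, G_r such that ⊕_{d=1}^r H̄_d ⊗ Q_d ≤ ⊕_{d=1}^r Ḡ_d ⊗ Q_d (a cohomomorphism exists) but ∑_{d=1}^r χ̄_f(H_d)·d^α > ∑_{d=1}^r χ̄_f(G_d)·d^α. -/
open scoped Kronecker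
open Matrix

namespace NCG

/-- The fractional clique cover number. -/
noncomputable def fracCliqueCover {V : Type} [Fintype V] [DecidableEq V]
    (G : SimpleGraph V) : ℝ :=
  sInf {t : ℝ | ∃ w : Finset V → ℝ, (∀ C, 0 ≤ w C) ∧
    (∀ C : Finset V, ¬ G.IsClique (C : Set V) → w C = 0) ∧
    (∀ v : V, 1 ≤ ∑ C : Finset V, if v ∈ C then w C else 0) ∧
    t = ∑ C : Finset V, w C}

/-! ### Bounds on the fractional clique cover number -/

section FracCliqueCover

variable {V : Type} [Fintype V] [DecidableEq V]

theorem fracCliqueCover_set_bddBelow (G : SimpleGraph V) :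
    BddBelow {t : ℝ | ∃ w : Finset V → ℝ, (∀ C, 0 ≤ w C) ∧
      (∀ C : Finset V, ¬ G.IsClique (C : Set V) → w C = 0) ∧
      (∀ v : V, 1 ≤ ∑ C : Finset V, if v ∈ C then w C else 0) ∧
      t = ∑ C : Finset V, w C} := by
  refine ⟨0, ?_⟩
  rintro t ⟨w, hw, -, -, rfl⟩
  exact Finset.sum_nonneg fun C _ => hw C

theorem fracCliqueCover_nonneg (G : SimpleGraph V) : 0 ≤ fracCliqueCover G := by
  refine Real.sInf_nonneg ?_
  rintro t ⟨w, hw, -, -, rfl⟩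
  exact Finset.sum_nonneg fun C _ => hw C

theorem fracCliqueCover_of_isEmpty [IsEmpty V] (G : SimpleGraph V) : fracCliqueCover G = 0 := by
  refine le_antisymm (csInf_le (fracCliqueCover_set_bddBelow G) ?_) (fracCliqueCover_nonneg G)
  exact ⟨0, by simp, by simp, fun v => isEmptyElim v, by simp⟩

theorem fracCliqueCover_le_one_of_subsingleton [Subsingleton V] (G : SimpleGraph V) :
    fracCliqueCover G ≤ 1 := by
  refine csInf_le (fracCliqueCover_set_bddBelow G) ⟨Pi.single Finset.univ 1, ?_, ?_, ?_, ?_⟩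
  · intro C
    by_cases h : C = Finset.univ
    · subst h; simp
    · simp [h]
  · intro C hC
    exact absurd (fun x _ y _ hxy => absurd (Subsingleton.elim x y) hxy) hC
  · intro v
    rw [Finset.sum_eq_single Finset.univ] <;> simp +contextual
  · simp

/-- If every clique has at most `c` vertices, every fractional clique cover has weight at least
`|V| / c`. -/
theorem card_le_mul_fracCliqueCover (G : SimpleGraph V) (c : ℕ) (hc : 0 < c)
    (h : ∀ C : Finset V, G.IsClique (C : Set V) → C.card ≤ c) :
    (Fintype.card V : ℝ) ≤ c * fracCliqueCover G := by
  have hc' : (0 : ℝ) < c := by exact_mod_cast hc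
  rw [← div_le_iff₀' hc']
  refine le_csInf ?_ ?_
  · refine ⟨_, fun C => if C.card = 1 then 1 else 0, ?_, ?_, ?_, rfl⟩
    · intro C
      dsimp only
      split_ifs <;> norm_num
    · intro C hC
      refine if_neg fun h1 => hC ?_
      obtain ⟨a, rfl⟩ := Finset.card_eq_one.1 h1
      simp
    · intro v
      have := Finset.single_le_sum (f := fun C : Finset V =>
        if v ∈ C then (if C.card = 1 then (1 : ℝ) else 0) else 0) (s := Finset.univ)
        (fun C _ => by split_ifs <;> norm_num) (Finset.mem_univ {v})
      simpa using this
  · rintro t ⟨w, hw, hw0, hcov, rfl⟩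
    rw [div_le_iff₀' hc']
    calc (Fintype.card V : ℝ) = ∑ _v : V, (1 : ℝ) := by simp
      _ ≤ ∑ v : V, ∑ C : Finset V, if v ∈ C then w C else 0 :=
        Finset.sum_le_sum fun v _ => hcov v
      _ = ∑ C : Finset V, (C.card : ℝ) * w C := by
        rw [Finset.sum_comm]
        simp
      _ ≤ ∑ C : Finset V, (c : ℝ) * w C := by
        refine Finset.sum_le_sum fun C _ => ?_
        by_cases hC : G.IsClique (C : Set V)
        · exact mul_le_mul_of_nonneg_right (by exact_mod_cast h C hC) (hw C)
        · simp [hw0 C hC]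
      _ = c * ∑ C : Finset V, w C := by rw [Finset.mul_sum]

end FracCliqueCover

/-! ### Cohomomorphisms from orthogonal representations -/

/-- The graph on `Fin K` in which two vertices are adjacent when the corresponding vectors
(given by their first `n` coordinates) are not orthogonal. -/
def nonorthogonalityGraph (n : ℕ) (v : ℕ → ℕ → ℂ) (K : ℕ) : SimpleGraph (Fin K) where
  Adj x y := x ≠ y ∧ ∑ i : Fin n, star (v x i) * v y i ≠ 0
  symm := by
    refine ⟨?_⟩
    rintro x y ⟨hxy, h⟩
    refine ⟨hxy.symm, fun h0 => h ?_⟩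
    rw [← star_eq_zero, star_sum, ← h0]
    exact Finset.sum_congr rfl fun i _ => by simp [mul_comm]
  loopless := ⟨fun x h => h.1 rfl⟩

theorem exists_of_mem_ncTensor_qGraph {V : Type} [Fintype V] [DecidableEq V]
    (S : Submodule ℂ (Matrix V V ℂ)) (d : ℕ) {M : Matrix (V × Fin d) (V × Fin d) ℂ}
    (hM : M ∈ ncTensor S (qGraph d)) (a b : V) :
    ∃ c : ℂ, ∀ i j : Fin d, M (a, i) (b, j) = if i = j then c else 0 := by
  induction hM using Submodule.span_induction with
  | mem M h =>
    obtain ⟨X, -, Y, hY, rfl⟩ := h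
    obtain ⟨y, rfl⟩ := Submodule.mem_span_singleton.1 hY
    refine ⟨X a b * y, fun i j => ?_⟩
    by_cases hij : i = j <;> simp [hij]
  | zero => exact ⟨0, by simp⟩
  | add M M' _ _ h h' =>
    obtain ⟨c, hc⟩ := h
    obtain ⟨c', hc'⟩ := h'
    refine ⟨c + c', fun i j => ?_⟩
    rw [Matrix.add_apply, hc, hc']
    split_ifs <;> simp
  | smul z M _ h =>
    obtain ⟨c, hc⟩ := h
    refine ⟨z * c, fun i j => ?_⟩
    rw [Matrix.smul_apply, hc]
    split_ifs <;> simp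

/-- An `n`-dimensional orthogonal representation by unit vectors encodes its nonorthogonality graph
into `Q_n`, for `n = D + 1`. -/
theorem cohom_nonorthogonalityGraph (D K : ℕ) (v : ℕ → ℕ → ℂ)
    (hv : ∀ x < K, ∑ i : Fin (D + 1), star (v x i) * v x i = 1) :
    Cohom
      (bigSum fun d : Fin (D + 1) =>
        nonorthogonalityGraph (D + 1) v (if d.1 = 0 then K else 0))
      (bigSum fun d : Fin (D + 1) =>
        (⊥ : SimpleGraph (Fin (if d.1 = D then 1 else 0)))) := by
  have last_of : ∀ (d : Fin (D + 1)) (_ : Fin (if d.1 = D then 1 else 0)), d = Fin.last D := by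
    intro d a
    by_contra h
    have h' : d.1 ≠ D := fun h' => h (Fin.ext h')
    rw [if_neg h'] at a
    exact a.elim0
  have zero_of : ∀ (d : Fin (D + 1)) (_ : Fin (if d.1 = 0 then K else 0)), d = 0 := by
    intro d a
    by_contra h
    have h' : d.1 ≠ 0 := fun h' => h (Fin.ext h')
    rw [if_neg h'] at a
    exact a.elim0
  have sum_eq : ∀ g : ℕ → ℂ,
      ∑ p : (Σ d : Fin (D + 1), Fin (if d.1 = D then 1 else 0) × Fin (d.1 + 1)), g p.2.2 =
        ∑ i : Fin (D + 1), g i := by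
    intro g
    rw [Fintype.sum_sigma, Finset.sum_eq_single (Fin.last D)]
    · rw [Fintype.sum_prod_type]
      simp
    · intro d _ hd
      refine Fintype.sum_eq_zero _ fun p => absurd (last_of d p.1) hd
    · simp
  obtain ⟨E, hE⟩ : ∃ E : Fin K →
      Matrix (Σ d : Fin (D + 1), Fin (if d.1 = D then 1 else 0) × Fin (d.1 + 1))
        (Σ d : Fin (D + 1), Fin (if d.1 = 0 then K else 0) × Fin (d.1 + 1)) ℂ,
      ∀ x p q, E x p q = if q.2.1.1 = x.1 then v x p.2.2 else 0 :=
    ⟨fun x => Matrix.of fun p q => if q.2.1.1 = x.1 then v x p.2.2 else 0, fun _ _ _ => rfl⟩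
  refine ⟨K, E, ?_, ?_⟩
  · ext q q'
    obtain ⟨d, x, i⟩ := q
    obtain ⟨d', x', i'⟩ := q'
    obtain rfl := zero_of d x
    obtain rfl := zero_of d' x'
    obtain rfl : i = i' := Subsingleton.elim (α := Fin 1) i i'
    change Fin K at x x'
    rw [Matrix.sum_apply]
    have key : ∀ y : Fin K, ((E y)ᴴ * E y) ⟨0, x, i⟩ ⟨0, x', i⟩ =
        if x = y ∧ x' = y then 1 else 0 := by
      intro y
      rw [Matrix.mul_apply]
      by_cases h : x = y ∧ x' = y
      · obtain ⟨rfl, rfl⟩ := h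
        simp only [Matrix.conjTranspose_apply, hE, if_true, and_self]
        rw [sum_eq fun i => star (v x' i) * v x' i]
        exact hv _ x'.2
      · rw [if_neg h]
        refine Finset.sum_eq_zero fun p _ => ?_
        rw [not_and_or] at h
        rcases h with h | h
        · have h' : x.1 ≠ y.1 := fun e => h (Fin.ext e)
          simp [hE, Matrix.conjTranspose_apply, h']
        · have h' : x'.1 ≠ y.1 := fun e => h (Fin.ext e)
          simp [hE, h']
    rw [Finset.sum_congr rfl fun y _ => key y]
    by_cases hx : x = x'
    · subst hx
      simp
    · rw [Matrix.one_apply_ne]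
      · refine Finset.sum_eq_zero fun y _ => if_neg ?_
        rintro ⟨rfl, rfl⟩
        exact hx rfl
      · intro h
        have h' : (x, i) = (x', i) := eq_of_heq (Sigma.mk.inj h).2
        exact hx (congrArg Prod.fst h')
  · intro x y M hM
    obtain ⟨c, hc⟩ : ∃ c : ℂ, ∀ p p', M p p' = if p.2.2.1 = p'.2.2.1 then c else 0 := by
      have hlast : (if (Fin.last D).1 = D then 1 else 0) = 1 := by simp
      let a : Fin (if (Fin.last D).1 = D then 1 else 0) := ⟨0, by simp⟩
      have ha : ∀ b, b = a := by
        intro b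
        apply Fin.ext
        have := b.2
        simp only [hlast] at this
        change b.1 = 0
        omega
      obtain ⟨c, hc⟩ := exists_of_mem_ncTensor_qGraph _ _ (hM.2 (Fin.last D)) a a
      refine ⟨c, ?_⟩
      rintro ⟨d, b, i⟩ ⟨d', b', i'⟩
      obtain rfl := last_of d b
      obtain rfl := last_of d' b'
      rw [ha b, ha b']
      have := hc i i'
      simp only [Matrix.of_apply] at this
      rw [this]
      simp only [Fin.ext_iff]
    have hprod : ∀ q q', ((E x)ᴴ * M * E y) q q' =
        if q.2.1.1 = x.1 ∧ q'.2.1.1 = y.1 then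
          c * ∑ i : Fin (D + 1), star (v x i) * v y i else 0 := by
      intro q q'
      rw [Matrix.mul_apply]
      simp only [Matrix.mul_apply, Matrix.conjTranspose_apply, hc, hE]
      by_cases h1 : q.2.1.1 = x.1
      · by_cases h2 : q'.2.1.1 = y.1
        · simp only [h1, h2, if_true, and_self]
          have inner : ∀ n : ℕ, ∑ p : (Σ d : Fin (D + 1),
              Fin (if d.1 = D then 1 else 0) × Fin (d.1 + 1)),
              star (v x p.2.2) * (if p.2.2.1 = n then c else 0) =
              ∑ i : Fin (D + 1), star (v x i) * (if i.1 = n then c else 0) :=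
            fun n => sum_eq fun i => star (v x i) * (if i = n then c else 0)
          simp only [inner]
          rw [sum_eq fun n => (∑ i : Fin (D + 1), star (v x i) * (if i.1 = n then c else 0)) *
            v y n, Finset.mul_sum]
          refine Finset.sum_congr rfl fun j _ => ?_
          simp only [← Fin.ext_iff, mul_ite, mul_zero, Finset.sum_ite_eq', Finset.mem_univ, if_true]
          ring
        · simp [h2]
      · simp [h1]
    refine ⟨?_, ?_⟩
    · rintro ⟨d, z, i⟩ ⟨d', z', i'⟩ hne
      exact absurd ((zero_of d z).trans (zero_of d' z').symm) hne
    · intro d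
      by_cases hd : d = 0
      · subst hd
        set s := ∑ i : Fin (D + 1), star (v x i) * v y i
        have hblock : (Matrix.of fun z z' : Fin (if (0 : Fin (D + 1)).1 = 0 then K else 0) ×
            Fin ((0 : Fin (D + 1)).1 + 1) => ((E x)ᴴ * M * E y) ⟨0, z⟩ ⟨0, z'⟩) =
            (c * s) • ((Matrix.single x y (1 : ℂ)) ⊗ₖ (1 : Matrix (Fin 1) (Fin 1) ℂ)) := by
          ext ⟨z, i⟩ ⟨z', i'⟩
          obtain rfl : i = i' := Subsingleton.elim (α := Fin 1) i i'
          rw [Matrix.of_apply, hprod]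
          change Fin K at z z'
          change Fin 1 at i
          change _ = (c * s) • (Matrix.single x y (1 : ℂ) z z' * (1 : Matrix (Fin 1) (Fin 1) ℂ) i i)
          simp only [Matrix.one_apply_eq, mul_one, smul_eq_mul, Matrix.single_apply, mul_ite,
            mul_zero]
          refine if_congr ?_ rfl rfl
          simp only [Fin.ext_iff, eq_comm]
        rw [hblock]
        by_cases h0 : s = 0
        · rw [h0, mul_zero, zero_smul]
          exact Submodule.zero_mem _
        · refine Submodule.smul_mem _ _ (Submodule.subset_span ⟨_, ?_, _, ?_, rfl⟩)
          · refine Submodule.subset_span ⟨x, y, ?_, rfl⟩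
            by_cases hxy : x = y
            · exact Or.inr hxy
            · exact Or.inl ⟨hxy, h0⟩
          · exact Submodule.subset_span rfl
      · convert Submodule.zero_mem _
        ext z
        exact absurd (zero_of d z.1) hd

/-! ### Sign vectors -/

/-- A family of integer vectors whose self inner products vanish modulo `p` while the mutual ones
do not has at most as many members as there are monomials of degree `p - 1`, plus one. -/
theorem card_le_of_inner_mod_prime {V : Type} [DecidableEq V] (p n : ℕ) [Fact p.Prime]
    (u : V → Fin n → ℤ) (A : Finset V)
    (hself : ∀ x ∈ A, (p : ℤ) ∣ ∑ i, u x i * u x i)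
    (hne : ∀ x ∈ A, ∀ y ∈ A, x ≠ y → ¬ (p : ℤ) ∣ ∑ i, u x i * u y i) :
    A.card ≤ (n + (p - 1) - 1).choose (p - 1) + 1 := by
  have hp : p.Prime := Fact.out
  let B : Matrix A (Option (Sym (Fin n) (p - 1))) (ZMod p) := fun x k =>
    k.elim 1 fun k => -((k.1.countPerms : ZMod p) * (k.1.map fun i => (u x i : ZMod p)).prod)
  let C : Matrix (Option (Sym (Fin n) (p - 1))) A (ZMod p) := fun k y =>
    k.elim 1 fun k => (k.1.map fun i => (u y i : ZMod p)).prod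
  have hBC : B * C = 1 := by
    ext x y
    have hexp : (B * C) x y = 1 - ((∑ i, u x i * u y i : ℤ) : ZMod p) ^ (p - 1) := by
      rw [Matrix.mul_apply, Fintype.sum_option]
      push_cast
      rw [Finset.sum_pow, Finset.sym_univ]
      simp only [B, C, Option.elim, Multiset.prod_map_mul, one_mul, sub_eq_add_neg,
        ← Finset.sum_neg_distrib]
      congr 1
      refine Finset.sum_congr rfl fun k _ => ?_
      ring
    rw [hexp]
    by_cases hxy : x = y
    · subst hxy
      rw [(ZMod.intCast_zmod_eq_zero_iff_dvd _ p).2 (hself x x.2), Matrix.one_apply_eq,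
        zero_pow (Nat.sub_ne_zero_of_lt hp.one_lt), sub_zero]
    · rw [Matrix.one_apply_ne hxy, ZMod.pow_card_sub_one_eq_one, sub_self]
      rw [Ne, ZMod.intCast_zmod_eq_zero_iff_dvd]
      exact hne x x.2 y y.2 fun h => hxy (Subtype.ext h)
  have hrank : (B * C).rank ≤ Fintype.card (Option (Sym (Fin n) (p - 1))) :=
    (Matrix.rank_mul_le_left B C).trans (Matrix.rank_le_card_width B)
  rw [hBC, Matrix.rank_one, Fintype.card_option, Sym.card_sym_eq_choose] at hrank
  simpa using hrank

/-- The coordinates of a sign vector, extended by the product of its signs and by `1`. -/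
def extendedSigns {N : ℕ} (x : Fin N → ℤˣ) (i : ℕ) : ℤ :=
  if h : i < N then (x ⟨i, h⟩ : ℤ) else if i = N then ((∏ j, x j : ℤˣ) : ℤ) else 1

theorem sum_extendedSigns_mul {N : ℕ} (x y : Fin N → ℤˣ) :
    ∑ i : Fin (N + 2), extendedSigns x i * extendedSigns y i =
      ∑ i, ((x i * y i : ℤˣ) : ℤ) + ((∏ i, x i * y i : ℤˣ) : ℤ) + 1 := by
  rw [Fin.sum_univ_castSucc, Fin.sum_univ_castSucc]
  simp [extendedSigns, Finset.prod_mul_distrib]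

theorem four_dvd_sum_units {ι : Type} [DecidableEq ι] (s : Finset ι) (z : ι → ℤˣ) :
    (4 : ℤ) ∣ ∑ i ∈ s, (z i : ℤ) - (s.card - 1 + ((∏ i ∈ s, z i : ℤˣ) : ℤ)) := by
  induction s using Finset.induction_on with
  | empty => simp
  | insert a s ha ih =>
    rw [Finset.sum_insert ha, Finset.prod_insert ha, Finset.card_insert_of_notMem ha]
    push_cast
    push_cast at ih
    rcases Int.units_eq_one_or (z a) with h | h <;>
      rcases Int.units_eq_one_or (∏ i ∈ s, z i) with h' | h' <;>
      · have h'' := congrArg (fun w : ℤˣ => (w : ℤ)) h'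
        push_cast at h''
        rw [h'', h]
        rw [h''] at ih
        push_cast
        omega

theorem sum_extendedSigns_self {N : ℕ} (x : Fin N → ℤˣ) :
    ∑ i : Fin (N + 2), extendedSigns x i * extendedSigns x i = N + 2 := by
  rw [sum_extendedSigns_mul]
  simp [← sq, Int.units_sq]
  ring

theorem four_dvd_sum_extendedSigns {N : ℕ} (hN : 4 ∣ N + 2) (x y : Fin N → ℤˣ) :
    (4 : ℤ) ∣ ∑ i : Fin (N + 2), extendedSigns x i * extendedSigns y i := by
  rw [sum_extendedSigns_mul]
  have h := four_dvd_sum_units Finset.univ fun i => x i * y i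
  rw [Finset.card_univ, Fintype.card_fin] at h
  rcases Int.units_eq_one_or (∏ i, x i * y i) with h' | h' <;>
  · rw [h'] at h ⊢
    push_cast at h ⊢
    omega

theorem abs_sum_extendedSigns_lt {N : ℕ} {x y : Fin N → ℤˣ} (hxy : x ≠ y) :
    |∑ i : Fin (N + 2), extendedSigns x i * extendedSigns y i| < N + 2 := by
  rw [sum_extendedSigns_mul]
  have hle : ∀ z : ℤˣ, -1 ≤ (z : ℤ) ∧ (z : ℤ) ≤ 1 := by
    intro z
    rcases Int.units_eq_one_or z with h | h <;> simp [h]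
  have hprod := hle (∏ i, x i * y i)
  have hlow : -(N : ℤ) ≤ ∑ i, ((x i * y i : ℤˣ) : ℤ) := by
    have := Finset.sum_le_sum fun i (_ : i ∈ Finset.univ) => (hle (x i * y i)).1
    simpa using this
  have hup : ∑ i, ((x i * y i : ℤˣ) : ℤ) < N := by
    obtain ⟨j, hj⟩ := Function.ne_iff.1 hxy
    have := Finset.sum_lt_sum (fun i (_ : i ∈ Finset.univ) => (hle (x i * y i)).2)
      ⟨j, Finset.mem_univ j, ?_⟩
    · simpa using this
    · rcases Int.units_eq_one_or (x j * y j) with h | h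
      · refine absurd ?_ hj
        rw [← mul_inv_eq_one, Int.units_inv_eq_self, h]
      · simp [h]
  rw [abs_lt]
  constructor <;> linarith [hprod.1, hprod.2]

theorem card_le_of_nonorthogonal_signs (p N : ℕ) (hp : p.Prime) (hp2 : 2 < p) (hN : N + 2 = 4 * p)
    (A : Finset (Fin N → ℤˣ))
    (hA : ∀ x ∈ A, ∀ y ∈ A, x ≠ y →
      ∑ i : Fin (N + 2), extendedSigns x i * extendedSigns y i ≠ 0) :
    A.card ≤ (5 * p - 2).choose (p - 1) + 1 := by
  have : Fact p.Prime := ⟨hp⟩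
  have hN' : (N : ℤ) + 2 = 4 * p := by exact_mod_cast hN
  have h := card_le_of_inner_mod_prime p (N + 2) (fun x i => extendedSigns x i) A ?_ ?_
  · convert h using 3
    omega
  · intro x _
    rw [sum_extendedSigns_self, hN']
    exact Dvd.intro_left _ rfl
  · intro x hx y hy hxy hdvd
    refine hA x hx y hy hxy (Int.eq_zero_of_abs_lt_dvd (m := 4 * p) ?_ ?_)
    · refine IsCoprime.mul_dvd ?_ (four_dvd_sum_extendedSigns (by omega) x y) hdvd
      have : Nat.Coprime 4 p := by
        have : Nat.Coprime 2 p := (Nat.coprime_primes Nat.prime_two hp).2 hp2.ne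
        exact Nat.Coprime.pow_left 2 this
      exact_mod_cast Nat.isCoprime_iff_coprime.2 this
    · rw [← hN']
      exact abs_sum_extendedSigns_lt hxy

/-! ### Growth -/

theorem choose_mul_pow_le (n k : ℕ) (hk : k ≤ n) : n.choose k * 3 ^ (n - k) ≤ 4 ^ n := by
  have h := add_pow 1 3 n
  norm_num at h
  rw [h]
  have := Finset.single_le_sum (f := fun m => 3 ^ (n - m) * n.choose m)
    (fun _ _ => Nat.zero_le _) (Finset.mem_range.2 (Nat.lt_succ_of_le hk))
  simpa [mul_comm] using this

theorem choose_add_one_le (p : ℕ) (hp : 2 < p) :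
    (((5 * p - 2).choose (p - 1) + 1 : ℕ) : ℝ) ≤ (1024 / 81) ^ p := by
  have h := choose_mul_pow_le (5 * p - 2) (p - 1) (by omega)
  have hpos : 1 ≤ (5 * p - 2).choose (p - 1) := Nat.choose_pos (by omega)
  obtain ⟨q, rfl⟩ : ∃ q, p = q + 1 := ⟨p - 1, by omega⟩
  have e1 : 5 * (q + 1) - 2 = 5 * q + 3 := by omega
  have e2 : 5 * q + 3 - q = 4 * q + 3 := by omega
  rw [Nat.add_sub_cancel, e1] at h hpos
  rw [Nat.add_sub_cancel, e1]
  rw [e2, pow_add, pow_add, pow_mul, pow_mul] at h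
  have h' : ((5 * q + 3).choose q : ℝ) * (81 ^ q * 27) ≤ 1024 ^ q * 64 := by exact_mod_cast h
  have hpos' : (1 : ℝ) ≤ (5 * q + 3).choose q := by exact_mod_cast hpos
  rw [div_pow, le_div_iff₀ (by positivity), pow_succ, pow_succ]
  push_cast
  have h81 : (0 : ℝ) < 81 ^ q := by positivity
  have h1024 : (0 : ℝ) < 1024 ^ q := by positivity
  nlinarith

theorem exists_prime_rpow_mul_lt (α : ℝ) :
    ∃ p : ℕ, p.Prime ∧ 2 < p ∧
      ((4 * p : ℕ) : ℝ) ^ α * (((5 * p - 2).choose (p - 1) + 1 : ℕ) : ℝ) < 2 ^ (4 * p - 2) := by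
  set k := ⌈α⌉₊
  have ht := tendsto_pow_const_div_const_pow_of_one_lt k (r := (81 / 64 : ℝ)) (by norm_num)
  have hev := ht.eventually_lt_const (show (0 : ℝ) < 1 / (4 * 4 ^ k) by positivity)
  obtain ⟨n₀, hn₀⟩ := Filter.eventually_atTop.1 hev
  obtain ⟨p, hpn, hp⟩ := Nat.exists_infinite_primes (max n₀ 3)
  have hp2 : 2 < p := by omega
  refine ⟨p, hp, hp2, ?_⟩
  have h1 := hn₀ p (by omega)
  rw [div_lt_div_iff₀ (by positivity) (by positivity), one_mul] at h1
  have h2 : ((4 * p : ℕ) : ℝ) ^ α ≤ ((4 * p : ℕ) : ℝ) ^ k := by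
    rw [← Real.rpow_natCast]
    exact Real.rpow_le_rpow_of_exponent_le (by exact_mod_cast (by omega : 1 ≤ 4 * p))
      (Nat.le_ceil α)
  have h3 : (2 : ℝ) ^ (4 * p - 2) * 4 = 16 ^ p := by
    rw [show (4 : ℝ) = 2 ^ 2 by norm_num, ← pow_add, show 4 * p - 2 + 2 = 4 * p by omega, pow_mul]
    norm_num
  have h4 : (16 : ℝ) ^ p = (81 / 64) ^ p * (1024 / 81) ^ p := by
    rw [← mul_pow]
    norm_num
  have h5 : ((4 * p : ℕ) : ℝ) ^ k * 4 < (81 / 64) ^ p := by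
    push_cast
    rw [mul_pow]
    linarith
  calc ((4 * p : ℕ) : ℝ) ^ α * (((5 * p - 2).choose (p - 1) + 1 : ℕ) : ℝ)
      ≤ ((4 * p : ℕ) : ℝ) ^ k * (1024 / 81) ^ p := by
        gcongr
        exact choose_add_one_le p hp2
    _ < 2 ^ (4 * p - 2) := by
        have : (0 : ℝ) < (1024 / 81) ^ p := by positivity
        nlinarith

/-- The nonorthogonality graph of unit vectors in dimension `4p`, on `2 ^ (4p - 2)` vertices, whose
cliques are all small. -/
theorem exists_unit_vectors_clique_le (p N : ℕ) (hp : p.Prime) (hp2 : 2 < p)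
    (hN : N + 2 = 4 * p) :
    ∃ v : ℕ → ℕ → ℂ, (∀ x < 2 ^ N, ∑ i : Fin (N + 2), star (v x i) * v x i = 1) ∧
      ∀ C : Finset (Fin (2 ^ N)), (nonorthogonalityGraph (N + 2) v (2 ^ N)).IsClique C →
        C.card ≤ (5 * p - 2).choose (p - 1) + 1 := by
  have hcard : Fintype.card (Fin N → ℤˣ) = 2 ^ N := by simp
  let e : Fin (2 ^ N) ≃ (Fin N → ℤˣ) := (Fintype.equivFinOfCardEq hcard).symm
  let t : ℝ := (Real.sqrt (N + 2))⁻¹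
  have ht : (t : ℂ) * t * (N + 2) = 1 := by
    have hsq : Real.sqrt (N + 2) * Real.sqrt (N + 2) = N + 2 := Real.mul_self_sqrt (by positivity)
    have hpos : (0 : ℝ) < N + 2 := by positivity
    have : t * t * (N + 2) = 1 := by
      rw [← mul_inv, hsq, inv_mul_cancel₀ hpos.ne']
    exact_mod_cast this
  let v : ℕ → ℕ → ℂ := fun n i =>
    if h : n < 2 ^ N then (t : ℂ) * (extendedSigns (e ⟨n, h⟩) i : ℂ) else 0
  have hinner : ∀ x y : Fin (2 ^ N), ∑ i : Fin (N + 2), star (v x i) * v y i =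
      (t : ℂ) * t *
        ((∑ i : Fin (N + 2), extendedSigns (e x) i * extendedSigns (e y) i : ℤ) : ℂ) := by
    intro x y
    push_cast
    rw [Finset.mul_sum]
    refine Finset.sum_congr rfl fun i _ => ?_
    simp only [v, x.2, y.2, dif_pos, star_mul', Fin.eta, RCLike.star_def, Complex.conj_ofReal,
      map_intCast]
    ring
  refine ⟨v, ?_, ?_⟩
  · intro x hx
    rw [hinner ⟨x, hx⟩ ⟨x, hx⟩, sum_extendedSigns_self]
    exact_mod_cast ht
  · intro C hC
    rw [← Finset.card_map e.toEmbedding]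
    refine card_le_of_nonorthogonal_signs p N hp hp2 hN _ ?_
    simp only [Finset.mem_map_equiv]
    intro x hx y hy hxy h0
    have hadj := hC hx hy (fun h => hxy (e.symm.injective h))
    refine hadj.2 ?_
    rw [hinner]
    simp [h0]

theorem fracCliqueCover_no_admissible_exponent (α : ℝ) :
    ∃ (r : ℕ) (m k : Fin r → ℕ)
      (G : ∀ d, SimpleGraph (Fin (m d))) (H : ∀ d, SimpleGraph (Fin (k d))),
      Cohom (bigSum H) (bigSum G) ∧
      ∑ d : Fin r, fracCliqueCover (G d) * ((d.1 + 1 : ℕ) : ℝ) ^ α <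
        ∑ d : Fin r, fracCliqueCover (H d) * ((d.1 + 1 : ℕ) : ℝ) ^ α := by
  obtain ⟨p, hp, hp2, hlt⟩ := exists_prime_rpow_mul_lt α
  obtain ⟨N, hN⟩ : ∃ N, N + 2 = 4 * p := ⟨4 * p - 2, by omega⟩
  obtain ⟨v, hunit, hclique⟩ := exists_unit_vectors_clique_le p N hp hp2 hN
  refine ⟨N + 2, _, _, _, _, cohom_nonorthogonalityGraph (N + 1) (2 ^ N) v hunit, ?_⟩
  have hcover := card_le_mul_fracCliqueCover _ _ (Nat.succ_pos _) hclique
  rw [Fintype.card_fin, Nat.cast_pow, Nat.cast_ofNat] at hcover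
  rw [show 4 * p - 2 = N by omega, ← hN] at hlt
  have hmain : ((N + 2 : ℕ) : ℝ) ^ α <
      fracCliqueCover (nonorthogonalityGraph (N + 2) v (2 ^ N)) := by
    have hpos : (0 : ℝ) < (((5 * p - 2).choose (p - 1) + 1 : ℕ) : ℝ) := by positivity
    refine lt_of_mul_lt_mul_right (hlt.trans_le ?_) hpos.le
    rw [mul_comm]
    exact hcover
  refine lt_of_le_of_lt ?_ (hmain.trans_le ?_)
  · rw [Finset.sum_eq_single (Fin.last (N + 1))]
    · have : Subsingleton (Fin (if (Fin.last (N + 1)).1 = N + 1 then 1 else 0)) := by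
        rw [Fin.subsingleton_iff_le_one]
        split_ifs <;> omega
      exact mul_le_of_le_one_left (by positivity) (fracCliqueCover_le_one_of_subsingleton _)
    · intro d _ hd
      have hd' : d.1 ≠ N + 1 := fun h => hd (Fin.ext h)
      have : IsEmpty (Fin (if d.1 = N + 1 then 1 else 0)) := by
        rw [if_neg hd']
        infer_instance
      rw [fracCliqueCover_of_isEmpty, zero_mul]
    · simp
  · refine le_trans ?_ (Finset.single_le_sum (fun d _ => mul_nonneg (fracCliqueCover_nonneg _)
      (by positivity)) (Finset.mem_univ (0 : Fin (N + 2))))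
    have h1 : (((0 : Fin (N + 2)).1 + 1 : ℕ) : ℝ) ^ α = 1 := by simp
    rw [h1, mul_one]
    exact le_rfl

end NCG
end

section
/- Let G_1, …, G_r and H_1, …, H_r be finite simple graphs, S = ⊕_{d=1}^r Ḡ_d ⊗ Q_d, and T = ⊕_{d=1}^r H̄_d ⊗ Q_d. Then the following are equivalent: (1) T ≤ S; (2) there exist a function φ : ⊔_{d=1}^r V(H_d) → ⊔_{d=1}^r V(G_d) and isometries U_h : ℂ^{π(h)} → ℂ^{π(φ(h))} (meaning U_h*U_h = I_{π(h)}) for each h ∈ ⊔_{d=1}^r V(H_d), such that (a) whenever ¬(h ≃ h'), either ¬(φ(h) ≃ φ(h')) or U_h*U_{h'} = 0, and (b) whenever h ≃ h' and φ(h) ≃ φ(h'), there is c ∈ ℂ with U_h*U_{h'} = c·I_{π(h)}. -/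
open scoped Kronecker
open Matrix

namespace NCG

/-- For vertices of a disjoint family of graphs: `g ≃ g'` iff they lie in the same member
graph and are adjacent or equal there. -/
def SimRel {r : ℕ} {V : Fin r → Type} (G : ∀ d, SimpleGraph (V d)) :
    (Σ d, V d) → (Σ d, V d) → Prop :=
  fun p q => ∃ e : p.1 = q.1,
    (G q.1).Adj (cast (congrArg V e) p.2) q.2 ∨ cast (congrArg V e) p.2 = q.2

/-- The inclusion of the block of the vertex `g` into the space on which `bigSum` acts. -/
def blockInclusion {r : ℕ} {V : Fin r → Type} [∀ d, DecidableEq (V d)] (g : Σ d, V d) :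
    Matrix (Σ d : Fin r, V d × Fin (d.1 + 1)) (Fin (g.1.1 + 1)) ℂ :=
  Matrix.of fun p a => if p = ⟨g.1, (g.2, a)⟩ then 1 else 0

lemma simRel_mk {r : ℕ} {V : Fin r → Type} (G : ∀ d, SimpleGraph (V d)) (d : Fin r) (x y : V d) :
    SimRel G ⟨d, x⟩ ⟨d, y⟩ ↔ (G d).Adj x y ∨ x = y :=
  ⟨fun ⟨_, h⟩ => h, fun h => ⟨rfl, h⟩⟩

/-- When `g ≃ g'`, the product `Aᴴ * B` vanishes if `¬ h ≃ h'` and is a scalar if `h ≃ h'`. -/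
def CompatiblePair {r : ℕ} {V W : Fin r → Type}
    (G : ∀ d, SimpleGraph (V d)) (H : ∀ d, SimpleGraph (W d)) (g g' : Σ d, V d)
    (h h' : Σ d, W d) (A : Matrix (Fin (g.1.1 + 1)) (Fin (h.1.1 + 1)) ℂ)
    (B : Matrix (Fin (g'.1.1 + 1)) (Fin (h'.1.1 + 1)) ℂ) : Prop :=
  (¬ SimRel H h h' → (¬ SimRel G g g' ∨ ∀ e : g.1 = g'.1,
    Aᴴ * B.submatrix (Fin.cast (congrArg (fun d : Fin r => d.1 + 1) e)) id = 0)) ∧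
  (SimRel H h h' → SimRel G g g' → ∀ (e : h.1 = h'.1) (e' : g.1 = g'.1), ∃ c : ℂ,
    Aᴴ * B.submatrix (Fin.cast (congrArg (fun d : Fin r => d.1 + 1) e'))
      (Fin.cast (congrArg (fun d : Fin r => d.1 + 1) e)) = c • 1)

lemma CompatiblePair.smul {r : ℕ} {V W : Fin r → Type}
    {G : ∀ d, SimpleGraph (V d)} {H : ∀ d, SimpleGraph (W d)}
    {g g' : Σ d, V d} {h h' : Σ d, W d} {A : Matrix (Fin (g.1.1 + 1)) (Fin (h.1.1 + 1)) ℂ}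
    {B : Matrix (Fin (g'.1.1 + 1)) (Fin (h'.1.1 + 1)) ℂ}
    (hAB : CompatiblePair G H g g' h h' A B) (s t : ℂ) :
    CompatiblePair G H g g' h h' (s • A) (t • B) := by
  refine ⟨fun hh => (hAB.1 hh).imp_right fun h0 e => ?_, fun hh hg e e' => ?_⟩
  · change (s • A)ᴴ * (t • B.submatrix _ _) = _
    rw [Matrix.mul_smul, conjTranspose_smul, Matrix.smul_mul, h0 e]
    simp
  · obtain ⟨c, hc⟩ := hAB.2 hh hg e e'
    refine ⟨t * star s * c, ?_⟩
    change (s • A)ᴴ * (t • B.submatrix _ _) = _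
    rw [Matrix.mul_smul, conjTranspose_smul, Matrix.smul_mul, hc,
      smul_smul, smul_smul]

section

variable {r : ℕ} {V W : Fin r → Type} [∀ d, Fintype (V d)] [∀ d, DecidableEq (V d)]
  [∀ d, Fintype (W d)] [∀ d, DecidableEq (W d)]

lemma mem_graphNC {X : Type} [Fintype X] [DecidableEq X] (G : SimpleGraph X) (C : Matrix X X ℂ) :
    C ∈ graphNC G ↔ ∀ x y, ¬ (G.Adj x y ∨ x = y) → C x y = 0 := by
  constructor
  · intro h x y hxy
    induction h using Submodule.span_induction with
    | mem M hM =>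
      obtain ⟨x', y', h', rfl⟩ := hM
      refine Matrix.single_apply_of_ne _ _ _ _ _ ?_
      rintro ⟨rfl, rfl⟩
      exact hxy h'
    | zero => rfl
    | add A B _ _ hA hB => simp [hA, hB]
    | smul c A _ hA => simp [hA]
  · intro h
    rw [Matrix.matrix_eq_sum_single C]
    refine Submodule.sum_mem _ fun x _ => Submodule.sum_mem _ fun y _ => ?_
    by_cases hxy : G.Adj x y ∨ x = y
    · have := (graphNC G).smul_mem (C x y) (Submodule.subset_span ⟨x, y, hxy, rfl⟩)
      simpa using this
    · simp [h x y hxy]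

lemma mem_ncTensor_graphNC_qGraph {X : Type} [Fintype X] [DecidableEq X] (G : SimpleGraph X)
    (n : ℕ) (M : Matrix (X × Fin n) (X × Fin n) ℂ) :
    M ∈ ncTensor (graphNC G) (qGraph n) ↔ ∃ C ∈ graphNC G, M = C ⊗ₖ 1 := by
  constructor
  · intro h
    induction h using Submodule.span_induction with
    | mem M hM =>
      obtain ⟨X, hX, Y, hY, rfl⟩ := hM
      obtain ⟨c, rfl⟩ := Submodule.mem_span_singleton.1 hY
      exact ⟨c • X, Submodule.smul_mem _ _ hX, by rw [kronecker_smul, smul_kronecker]⟩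
    | zero => exact ⟨0, Submodule.zero_mem _, by simp⟩
    | add A B _ _ hA hB =>
      obtain ⟨C, hC, rfl⟩ := hA
      obtain ⟨D, hD, rfl⟩ := hB
      exact ⟨C + D, Submodule.add_mem _ hC hD, by rw [add_kronecker]⟩
    | smul c A _ hA =>
      obtain ⟨C, hC, rfl⟩ := hA
      exact ⟨c • C, Submodule.smul_mem _ _ hC, by rw [smul_kronecker]⟩
  · rintro ⟨C, hC, rfl⟩
    exact Submodule.subset_span ⟨C, hC, 1, Submodule.mem_span_singleton_self _, rfl⟩

lemma block_apply (M : Matrix (Σ d : Fin r, V d × Fin (d.1 + 1))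
    (Σ d : Fin r, W d × Fin (d.1 + 1)) ℂ) (g : Σ d, V d) (h : Σ d, W d) (a b) :
    ((blockInclusion g)ᴴ * M * blockInclusion h) a b = M ⟨g.1, (g.2, a)⟩ ⟨h.1, (h.2, b)⟩ := by
  simp [Matrix.mul_apply, blockInclusion, apply_ite]

lemma blockInclusion_conjTranspose_mul_self (g : Σ d, V d) :
    (blockInclusion g)ᴴ * blockInclusion g = 1 := by
  ext a b
  simpa [Matrix.one_apply] using block_apply (1 : Matrix _ _ ℂ) g g a b

lemma sum_blockInclusion :
    ∑ g : Σ d, V d, blockInclusion g * (blockInclusion g)ᴴ = 1 := by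
  ext ⟨d, x, a⟩ ⟨d', y, b⟩
  simp only [Matrix.sum_apply, Matrix.mul_apply, blockInclusion, Matrix.of_apply,
    Matrix.conjTranspose_apply]
  rw [Finset.sum_eq_single ⟨d, x⟩]
  · rw [Finset.sum_eq_single a]
    · by_cases h : (⟨d, (x, a)⟩ : Σ d : Fin r, V d × Fin (d.1 + 1)) = ⟨d', (y, b)⟩
      · rw [if_pos rfl, if_pos h.symm, h, Matrix.one_apply_eq, star_one, mul_one]
      · rw [Matrix.one_apply_ne h, if_neg (Ne.symm h), star_zero, mul_zero]
    · intro c _ hc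
      simp [Ne.symm hc]
    · simp
  · rintro ⟨e, z⟩ _ hz
    refine Finset.sum_eq_zero fun c _ => ?_
    rw [if_neg, zero_mul]
    intro hh
    apply hz
    cases hh
    rfl
  · simp

lemma block_eq_zero {G : ∀ d, SimpleGraph (V d)}
    {M : Matrix (Σ d : Fin r, V d × Fin (d.1 + 1)) (Σ d : Fin r, V d × Fin (d.1 + 1)) ℂ}
    (hM : M ∈ bigSum G) (g g' : Σ d, V d) (hg : ¬ SimRel G g g') :
    (blockInclusion g)ᴴ * M * blockInclusion g' = 0 := by
  ext a b
  rw [block_apply]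
  obtain ⟨d, x⟩ := g
  obtain ⟨d', y⟩ := g'
  by_cases e : d = d'
  · subst e
    obtain ⟨C, hC, hMC⟩ := (mem_ncTensor_graphNC_qGraph _ _ _).1 (hM.2 d)
    have := congrFun (congrFun hMC (x, a)) (y, b)
    simp only [Matrix.of_apply, kroneckerMap_apply] at this
    rw [simRel_mk] at hg
    simp [this, (mem_graphNC _ _).1 hC x y hg]
  · exact hM.1 _ _ e

lemma exists_block_eq_smul_one {G : ∀ d, SimpleGraph (V d)}
    {M : Matrix (Σ d : Fin r, V d × Fin (d.1 + 1)) (Σ d : Fin r, V d × Fin (d.1 + 1)) ℂ}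
    (hM : M ∈ bigSum G) (d : Fin r) (x y : V d) :
    ∃ c : ℂ, (blockInclusion (⟨d, x⟩ : Σ d, V d))ᴴ * M * blockInclusion ⟨d, y⟩ = c • 1 := by
  obtain ⟨C, hC, hMC⟩ := (mem_ncTensor_graphNC_qGraph _ _ _).1 (hM.2 d)
  refine ⟨C x y, ?_⟩
  ext a b
  rw [block_apply]
  exact congrFun (congrFun hMC (x, a)) (y, b)

lemma blockInclusion_mul_mem_bigSum (G : ∀ d, SimpleGraph (V d)) (d : Fin r) (x y : V d)
    (hxy : (G d).Adj x y ∨ x = y) :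
    (blockInclusion (⟨d, x⟩ : Σ d, V d) * (blockInclusion (⟨d, y⟩ : Σ d, V d))ᴴ :
      Matrix (Σ d : Fin r, V d × Fin (d.1 + 1)) (Σ d : Fin r, V d × Fin (d.1 + 1)) ℂ) ∈
      bigSum G := by
  constructor
  · intro p q hpq
    rw [Matrix.mul_apply]
    refine Finset.sum_eq_zero fun a _ => ?_
    simp only [blockInclusion, Matrix.of_apply, Matrix.conjTranspose_apply]
    by_cases hp : p = ⟨d, (x, a)⟩
    · rw [if_neg (c := q = _), star_zero, mul_zero]
      rintro rfl
      exact hpq (hp ▸ rfl)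
    · rw [if_neg hp, zero_mul]
  · intro e
    rw [mem_ncTensor_graphNC_qGraph]
    by_cases he : e = d
    · subst he
      refine ⟨Matrix.single x y 1, Submodule.subset_span ⟨x, y, hxy, rfl⟩, ?_⟩
      ext ⟨z, a⟩ ⟨w, b⟩
      simp only [Matrix.mul_apply, blockInclusion, Matrix.of_apply, Matrix.conjTranspose_apply,
        kroneckerMap_apply, Matrix.single_apply, Matrix.one_apply]
      rw [Finset.sum_eq_single a]
      · by_cases h1 : x = z <;> by_cases h2 : y = w <;> by_cases h3 : a = b <;>
          simp [h1, h2, h3, eq_comm (a := z), eq_comm (a := w), eq_comm (a := b)]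
      · intro c _ hc
        simp [Ne.symm hc]
      · simp
    · refine ⟨0, Submodule.zero_mem _, ?_⟩
      ext ⟨z, a⟩ ⟨w, b⟩
      simp [Matrix.mul_apply, blockInclusion, he]

lemma compatiblePair_block (G : ∀ d, SimpleGraph (V d)) (H : ∀ d, SimpleGraph (W d))
    (E F : Matrix (Σ d : Fin r, V d × Fin (d.1 + 1)) (Σ d : Fin r, W d × Fin (d.1 + 1)) ℂ)
    (hEF : ∀ M ∈ bigSum G, Eᴴ * M * F ∈ bigSum H) (g g' : Σ d, V d) (h h' : Σ d, W d) :
    CompatiblePair G H g g' h h' ((blockInclusion g)ᴴ * E * blockInclusion h)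
      ((blockInclusion g')ᴴ * F * blockInclusion h') := by
  by_cases hg : SimRel G g g'
  swap
  · exact ⟨fun _ => Or.inl hg, fun _ h => absurd h hg⟩
  obtain ⟨d, x⟩ := g
  obtain ⟨d', y⟩ := g'
  obtain rfl : d = d' := hg.1
  have hM := hEF _ (blockInclusion_mul_mem_bigSum G d x y ((simRel_mk G d x y).1 hg))
  have key : ((blockInclusion (⟨d, x⟩ : Σ d, V d))ᴴ * E * blockInclusion h)ᴴ *
      ((blockInclusion (⟨d, y⟩ : Σ d, V d))ᴴ * F * blockInclusion h') =
      (blockInclusion h)ᴴ * (Eᴴ * (blockInclusion (⟨d, x⟩ : Σ d, V d) *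
        (blockInclusion (⟨d, y⟩ : Σ d, V d))ᴴ) * F) * blockInclusion h' := by
    simp only [conjTranspose_mul, conjTranspose_conjTranspose, Matrix.mul_assoc]
  refine ⟨fun hh => Or.inr fun _ => key.trans (block_eq_zero hM h h' hh), fun _ _ e _ => ?_⟩
  obtain ⟨k, z⟩ := h
  obtain ⟨k', w⟩ := h'
  obtain rfl : k = k' := e
  obtain ⟨c, hc⟩ := exists_block_eq_smul_one hM k z w
  exact ⟨c, key.trans hc⟩

lemma CompatiblePair.mem_bigSum {G : ∀ d, SimpleGraph (V d)} {H : ∀ d, SimpleGraph (W d)}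
    {g g' : Σ d, V d} {h h' : Σ d, W d} {A : Matrix (Fin (g.1.1 + 1)) (Fin (h.1.1 + 1)) ℂ}
    {B : Matrix (Fin (g'.1.1 + 1)) (Fin (h'.1.1 + 1)) ℂ}
    (hAB : CompatiblePair G H g g' h h' A B)
    {M : Matrix (Σ d : Fin r, V d × Fin (d.1 + 1)) (Σ d : Fin r, V d × Fin (d.1 + 1)) ℂ}
    (hM : M ∈ bigSum G) :
    (blockInclusion g * A * (blockInclusion h)ᴴ)ᴴ * M *
      (blockInclusion g' * B * (blockInclusion h')ᴴ) ∈ bigSum H := by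
  have key : (blockInclusion g * A * (blockInclusion h)ᴴ)ᴴ * M *
      (blockInclusion g' * B * (blockInclusion h')ᴴ) =
      blockInclusion h * (Aᴴ * ((blockInclusion g)ᴴ * M * blockInclusion g') * B) *
        (blockInclusion h')ᴴ := by
    simp only [conjTranspose_mul, conjTranspose_conjTranspose, Matrix.mul_assoc]
  rw [key]
  by_cases hg : SimRel G g g'
  swap
  · simp [block_eq_zero hM g g' hg]
  obtain ⟨d, x⟩ := g
  obtain ⟨d', y⟩ := g'
  obtain rfl : d = d' := hg.1
  obtain ⟨c, hc⟩ := exists_block_eq_smul_one hM d x y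
  rw [hc, Matrix.mul_smul, Matrix.mul_one, Matrix.smul_mul, Matrix.mul_smul, Matrix.smul_mul]
  refine Submodule.smul_mem _ _ ?_
  by_cases hh : SimRel H h h'
  · obtain ⟨k, z⟩ := h
    obtain ⟨k', w⟩ := h'
    obtain rfl : k = k' := hh.1
    obtain ⟨c', hc'⟩ := hAB.2 hh hg rfl rfl
    have hc'' : Aᴴ * B = c' • 1 := hc'
    rw [hc'', Matrix.mul_smul, Matrix.mul_one, Matrix.smul_mul]
    exact Submodule.smul_mem _ _
      (blockInclusion_mul_mem_bigSum H k z w ((simRel_mk H k z w).1 hh))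
  · have h0 : Aᴴ * B = 0 := ((hAB.1 hh).resolve_left (not_not_intro hg)) rfl
    simp [h0]

open scoped ComplexOrder in
/-- A matrix whose Gram matrix is a nonzero scalar can be rescaled to an isometry. -/
lemma exists_smul_isometry {m n : ℕ} (A : Matrix (Fin m) (Fin (n + 1)) ℂ) (c : ℂ)
    (hA : Aᴴ * A = c • 1) (hc : c ≠ 0) : ∃ s : ℂ, (s • A)ᴴ * (s • A) = 1 := by
  have h0 : 0 ≤ c := by
    simpa [hA] using (posSemidef_conjTranspose_mul_self A).diag_nonneg (i := 0)
  lift c to ℝ using (Complex.nonneg_iff.1 h0).2.symm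
  have hc0 : 0 ≤ c := by exact_mod_cast h0
  refine ⟨((Real.sqrt c)⁻¹ : ℝ), ?_⟩
  rw [conjTranspose_smul, Matrix.smul_mul, Matrix.mul_smul, hA, smul_smul, smul_smul]
  have : star (((Real.sqrt c)⁻¹ : ℝ) : ℂ) * (((Real.sqrt c)⁻¹ : ℝ) : ℂ) * c = 1 := by
    rw [Complex.star_def, Complex.conj_ofReal, ← Complex.ofReal_mul, ← mul_inv,
      Real.mul_self_sqrt hc0, Complex.ofReal_inv, inv_mul_cancel₀ hc]
  rw [this, one_smul]

lemma exists_rescaled_block_isometry {G : ∀ d, SimpleGraph (V d)} {H : ∀ d, SimpleGraph (W d)}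
    {k : ℕ} {E : Fin k →
      Matrix (Σ d : Fin r, V d × Fin (d.1 + 1)) (Σ d : Fin r, W d × Fin (d.1 + 1)) ℂ}
    (hE : ∑ i, (E i)ᴴ * E i = 1)
    (hEM : ∀ i j, ∀ M ∈ bigSum G, (E i)ᴴ * M * E j ∈ bigSum H) (h : Σ d, W d) :
    ∃ (g : Σ d, V d) (i : Fin k) (s : ℂ),
      (s • ((blockInclusion g)ᴴ * E i * blockInclusion h))ᴴ *
        (s • ((blockInclusion g)ᴴ * E i * blockInclusion h)) = 1 := by
  by_contra hcon
  push Not at hcon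
  have hzero (g : Σ d, V d) (i : Fin k) :
      ((blockInclusion g)ᴴ * E i * blockInclusion h)ᴴ *
        ((blockInclusion g)ᴴ * E i * blockInclusion h) = 0 := by
    obtain ⟨c, hc⟩ := (compatiblePair_block G H _ _ (hEM i i) g g h h).2
      ⟨rfl, Or.inr rfl⟩ ⟨rfl, Or.inr rfl⟩ rfl rfl
    have hc' : ((blockInclusion g)ᴴ * E i * blockInclusion h)ᴴ *
        ((blockInclusion g)ᴴ * E i * blockInclusion h) = c • 1 := hc
    by_cases hc0 : c = 0
    · rw [hc', hc0, zero_smul]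
    · obtain ⟨s, hs⟩ := exists_smul_isometry _ c hc' hc0
      exact absurd hs (hcon g i s)
  have hsum : (1 : Matrix (Fin (h.1.1 + 1)) (Fin (h.1.1 + 1)) ℂ) = 0 := by
    calc (1 : Matrix (Fin (h.1.1 + 1)) (Fin (h.1.1 + 1)) ℂ)
        = (blockInclusion h)ᴴ * (∑ i, (E i)ᴴ * E i) * blockInclusion h := by
          rw [hE, Matrix.mul_one, blockInclusion_conjTranspose_mul_self]
      _ = (blockInclusion h)ᴴ * (∑ i, (E i)ᴴ *
            (∑ g : Σ d, V d, blockInclusion g * (blockInclusion g)ᴴ) * E i) *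
            blockInclusion h := by
          simp only [sum_blockInclusion, Matrix.mul_one]
      _ = ∑ i, ∑ g : Σ d, V d, ((blockInclusion g)ᴴ * E i * blockInclusion h)ᴴ *
            ((blockInclusion g)ᴴ * E i * blockInclusion h) := by
          simp only [Matrix.mul_sum, Matrix.sum_mul, conjTranspose_mul,
            conjTranspose_conjTranspose, Matrix.mul_assoc]
      _ = 0 := by simp only [hzero, Finset.sum_const_zero]
  exact one_ne_zero hsum

lemma cohom_of_compatiblePair {G : ∀ d, SimpleGraph (V d)} {H : ∀ d, SimpleGraph (W d)}
    (φ : (Σ d, W d) → (Σ d, V d))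
    (U : ∀ h : Σ d, W d, Matrix (Fin ((φ h).1.1 + 1)) (Fin (h.1.1 + 1)) ℂ)
    (hU : ∀ h, (U h)ᴴ * U h = 1)
    (hφ : ∀ h h', CompatiblePair G H (φ h) (φ h') h h' (U h) (U h')) :
    Cohom (bigSum H) (bigSum G) := by
  let e := (Fintype.equivFin (Σ d, W d)).symm
  refine ⟨_, fun i => blockInclusion (φ (e i)) * U (e i) * (blockInclusion (e i))ᴴ, ?_,
    fun i j M hM => (hφ (e i) (e j)).mem_bigSum hM⟩
  have hterm (h : Σ d, W d) : (blockInclusion (φ h) * U h * (blockInclusion h)ᴴ)ᴴ *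
      (blockInclusion (φ h) * U h * (blockInclusion h)ᴴ) =
      blockInclusion h * (blockInclusion h)ᴴ := by
    calc _ = blockInclusion h * ((U h)ᴴ * ((blockInclusion (φ h))ᴴ * blockInclusion (φ h)) *
          U h) * (blockInclusion h)ᴴ := by
          simp only [conjTranspose_mul, conjTranspose_conjTranspose, Matrix.mul_assoc]
      _ = _ := by
          rw [blockInclusion_conjTranspose_mul_self, Matrix.mul_one, hU, Matrix.mul_one]
  simp only [hterm]
  rw [e.sum_comp (fun h => blockInclusion h * (blockInclusion h)ᴴ), sum_blockInclusion]

end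

theorem cohom_iff_special_form
    {r : ℕ} {V W : Fin r → Type}
    [∀ d, Fintype (V d)] [∀ d, DecidableEq (V d)]
    [∀ d, Fintype (W d)] [∀ d, DecidableEq (W d)]
    (G : ∀ d, SimpleGraph (V d)) (H : ∀ d, SimpleGraph (W d)) :
    Cohom (bigSum H) (bigSum G) ↔
      ∃ (φ : (Σ d, W d) → (Σ d, V d))
        (U : ∀ h : Σ d, W d, Matrix (Fin ((φ h).1.1 + 1)) (Fin (h.1.1 + 1)) ℂ),
        (∀ h, (U h)ᴴ * U h = 1) ∧
        (∀ h h', ¬ SimRel H h h' →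
          (¬ SimRel G (φ h) (φ h') ∨
            ∀ e : (φ h).1 = (φ h').1,
              (U h)ᴴ *
                (U h').submatrix (Fin.cast (congrArg (fun d : Fin r => d.1 + 1) e)) id = 0)) ∧
        (∀ h h', SimRel H h h' → SimRel G (φ h) (φ h') →
          ∀ (e : h.1 = h'.1) (e' : (φ h).1 = (φ h').1),
            ∃ c : ℂ,
              (U h)ᴴ *
                (U h').submatrix (Fin.cast (congrArg (fun d : Fin r => d.1 + 1) e'))
                  (Fin.cast (congrArg (fun d : Fin r => d.1 + 1) e)) = c • 1) := by
  constructor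
  · rintro ⟨k, E, hE, hEM⟩
    choose φ i s hs using exists_rescaled_block_isometry hE hEM
    have hc (h h' : Σ d, W d) :=
      (compatiblePair_block G H _ _ (hEM (i h) (i h')) (φ h) (φ h') h h').smul (s h) (s h')
    exact ⟨φ, fun h => s h • ((blockInclusion (φ h))ᴴ * E (i h) * blockInclusion h), hs,
      fun h h' => (hc h h').1, fun h h' => (hc h h').2⟩
  · rintro ⟨φ, U, hU, ha, hb⟩
    exact cohom_of_compatiblePair φ U hU fun h h' => ⟨ha h h', hb h h'⟩

end NCG
end

section
/- Let H, G_1, …, G_r be finite simple graphs. Then H̄ ≤ ⊕_{d=1}^r Ḡ_d ⊗ Q_d if and only if there exist a function φ : V(H) → ⊔_{d=1}^r V(G_d) and unit vectors u_h ∈ ℂ^{π(φ(h))} (h ∈ V(H)) such that for all distinct non-adjacent vertices h, h' of H, either ¬(φ(h) ≃ φ(h')) or ⟨u_h, u_{h'}⟩ = 0. -/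
open scoped Kronecker
open Matrix

namespace NCG

/-- Entries of `Ḡ` vanish outside the pairs of adjacent or equal vertices. -/
theorem graphNC_apply_eq_zero {V : Type} [Fintype V] [DecidableEq V] {G : SimpleGraph V}
    {M : Matrix V V ℂ} (hM : M ∈ graphNC G) {x y : V} (h : ¬ (G.Adj x y ∨ x = y)) :
    M x y = 0 := by
  induction hM using Submodule.span_induction with
  | mem M hM =>
    obtain ⟨a, b, hab, rfl⟩ := hM
    rw [Matrix.single_apply_of_ne]
    rintro ⟨rfl, rfl⟩
    exact h hab
  | zero => rfl
  | add A B _ _ hA hB => simp [hA, hB]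
  | smul c A _ hA => simp [hA]

/-- Every block of an element of `Ḡ ⊗ Q_d` is a scalar matrix, which vanishes on pairs of
vertices that are neither adjacent nor equal. -/
theorem exists_block_eq_smul_one_s5 {V : Type} [Fintype V] [DecidableEq V] {G : SimpleGraph V}
    {d : ℕ} {M : Matrix (V × Fin d) (V × Fin d) ℂ} (hM : M ∈ ncTensor (graphNC G) (qGraph d))
    (x y : V) :
    ∃ c : ℂ, (¬ (G.Adj x y ∨ x = y) → c = 0) ∧
      M.submatrix (Prod.mk x) (Prod.mk y) = c • (1 : Matrix (Fin d) (Fin d) ℂ) := by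
  induction hM using Submodule.span_induction with
  | mem M hM =>
    obtain ⟨X, hX, Y, hY, rfl⟩ := hM
    obtain ⟨t, rfl⟩ := Submodule.mem_span_singleton.1 hY
    refine ⟨X x y * t, fun h => by rw [graphNC_apply_eq_zero hX h, zero_mul], ?_⟩
    ext a b
    simp [mul_assoc]
  | zero => exact ⟨0, fun _ => rfl, by ext; simp⟩
  | add A B _ _ hA hB =>
    obtain ⟨a, ha, ha'⟩ := hA
    obtain ⟨b, hb, hb'⟩ := hB
    refine ⟨a + b, fun h => by rw [ha h, hb h, add_zero], ?_⟩
    rw [add_smul, ← ha', ← hb']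
    rfl
  | smul c A _ hA =>
    obtain ⟨a, ha, ha'⟩ := hA
    refine ⟨c * a, fun h => by rw [ha h, mul_zero], ?_⟩
    rw [mul_smul, ← ha']
    rfl

section

variable {r : ℕ} {V : Fin r → Type}

/-- The basis index of `|g⟩ ⊗ |a⟩`. -/
def blockIndex (p : Σ d, V d) (a : Fin (p.1.1 + 1)) : Σ d : Fin r, V d × Fin (d.1 + 1) :=
  ⟨p.1, p.2, a⟩

theorem blockIndex_injective (p : Σ d, V d) : Function.Injective (blockIndex p) := by
  intro a b h
  simpa [blockIndex] using h

variable [∀ d, Fintype (V d)] [∀ d, DecidableEq (V d)]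

/-- The vector `|g⟩ ⊗ u`. -/
noncomputable def blockVec (p : Σ d, V d) (u : Fin (p.1.1 + 1) → ℂ) :
    (Σ d : Fin r, V d × Fin (d.1 + 1)) → ℂ :=
  ∑ a, Pi.single (blockIndex p a) (u a)

theorem star_blockVec_dotProduct_mulVec (p q : Σ d, V d) (u : Fin (p.1.1 + 1) → ℂ)
    (w : Fin (q.1.1 + 1) → ℂ)
    (M : Matrix (Σ d : Fin r, V d × Fin (d.1 + 1)) (Σ d : Fin r, V d × Fin (d.1 + 1)) ℂ) :
    star (blockVec p u) ⬝ᵥ M *ᵥ blockVec q w =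
      star u ⬝ᵥ M.submatrix (blockIndex p) (blockIndex q) *ᵥ w := by
  simp only [blockVec, star_sum, sum_dotProduct, Matrix.mulVec_sum, ← Pi.single_star,
    single_dotProduct, Finset.sum_apply, Matrix.mulVec_single, Pi.smul_apply, Matrix.col_apply,
    op_smul_eq_mul]
  rfl

theorem star_blockVec_dotProduct_self (p : Σ d, V d) (u : Fin (p.1.1 + 1) → ℂ) :
    star (blockVec p u) ⬝ᵥ blockVec p u = star u ⬝ᵥ u := by
  have h := star_blockVec_dotProduct_mulVec p p u u 1
  rwa [Matrix.submatrix_one _ (blockIndex_injective p), Matrix.one_mulVec, Matrix.one_mulVec] at h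

variable {G : ∀ d, SimpleGraph (V d)}

theorem star_blockVec_dotProduct_mulVec_eq_zero
    {M : Matrix (Σ d : Fin r, V d × Fin (d.1 + 1)) (Σ d : Fin r, V d × Fin (d.1 + 1)) ℂ}
    (hM : M ∈ bigSum G) (p q : Σ d, V d) (u : Fin (p.1.1 + 1) → ℂ) (w : Fin (q.1.1 + 1) → ℂ)
    (h : ¬ SimRel G p q ∨ ∀ e : p.1 = q.1,
      star u ⬝ᵥ (fun i => w (Fin.cast (congrArg (fun d : Fin r => d.1 + 1) e) i)) = 0) :
    star (blockVec p u) ⬝ᵥ M *ᵥ blockVec q w = 0 := by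
  rw [star_blockVec_dotProduct_mulVec]
  obtain ⟨d, x⟩ := p
  obtain ⟨d', y⟩ := q
  obtain ⟨hoff, hdiag⟩ := hM
  by_cases e : d = d'
  · subst e
    obtain ⟨c, hc, hblock⟩ := exists_block_eq_smul_one_s5 (hdiag d) x y
    have hsub : M.submatrix (blockIndex ⟨d, x⟩) (blockIndex ⟨d, y⟩) = c • 1 := hblock
    rw [hsub, Matrix.smul_mulVec, Matrix.one_mulVec, dotProduct_smul]
    rcases h with h | h
    · rw [hc fun hxy => h ⟨rfl, hxy⟩, zero_smul]
    · exact smul_eq_zero_of_right c (h rfl)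
  · have hsub : M.submatrix (blockIndex ⟨d, x⟩) (blockIndex ⟨d', y⟩) = 0 := by
      ext a b
      exact hoff _ _ e
    rw [hsub, Matrix.zero_mulVec, dotProduct_zero]

theorem sum_single_blockIndex_mem_bigSum {d : Fin r} {x y : V d} (h : (G d).Adj x y ∨ x = y) :
    ∑ a, Matrix.single (blockIndex ⟨d, x⟩ a) (blockIndex ⟨d, y⟩ a) (1 : ℂ) ∈ bigSum G := by
  refine ⟨fun s t hst => ?_, fun i => ?_⟩
  · rw [Matrix.sum_apply]
    refine Finset.sum_eq_zero fun a _ => Matrix.single_apply_of_ne _ _ _ _ _ ?_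
    rintro ⟨rfl, rfl⟩
    exact hst rfl
  · by_cases hi : d = i
    · subst hi
      refine Submodule.subset_span ⟨Matrix.single x y 1, Submodule.subset_span ⟨x, y, h, rfl⟩, 1,
        Submodule.mem_span_singleton_self _, ?_⟩
      ext ⟨z, a⟩ ⟨z', b⟩
      by_cases hz : x = z <;> by_cases hz' : y = z' <;>
        simp [Matrix.sum_apply, Matrix.single_apply, blockIndex, hz, hz', Matrix.one_apply,
          ite_and]
    · convert Submodule.zero_mem _
      ext s t
      simp [Matrix.sum_apply, blockIndex, hi]

theorem star_dotProduct_eq_zero_of_mem {VH : Type} [Fintype VH] [DecidableEq VH]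
    {H : SimpleGraph VH} {A B : Matrix (Σ d : Fin r, V d × Fin (d.1 + 1)) VH ℂ}
    (hAB : ∀ M ∈ bigSum G, Aᴴ * M * B ∈ graphNC H) {h h' : VH} (hne : h ≠ h')
    (hadj : ¬ H.Adj h h') {p q : Σ d, V d} (hpq : SimRel G p q) (e : p.1 = q.1) :
    star (fun a => A (blockIndex p a) h) ⬝ᵥ
      (fun i => B (blockIndex q (Fin.cast (congrArg (fun d : Fin r => d.1 + 1) e) i)) h') = 0 := by
  obtain ⟨d, x⟩ := p
  obtain ⟨d', y⟩ := q
  obtain ⟨e', hxy⟩ := hpq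
  obtain rfl : d = d' := e
  replace hxy : (G d).Adj x y ∨ x = y := hxy
  have key := graphNC_apply_eq_zero (hAB _ (sum_single_blockIndex_mem_bigSum hxy))
    (x := h) (y := h') (by tauto)
  rw [Matrix.mul_sum, Matrix.sum_mul, Matrix.sum_apply] at key
  rw [← key, dotProduct]
  refine Finset.sum_congr rfl fun a _ => ?_
  rw [Matrix.mul_assoc, Matrix.mul_apply, Finset.sum_eq_single (blockIndex ⟨d, x⟩ a)]
  · simp
  · intro s _ hs
    rw [Matrix.single_mul_apply_of_ne _ _ _ _ _ hs, mul_zero]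
  · simp

end

theorem exists_smul_unit {n : Type*} [Fintype n] {v : n → ℂ} (hv : v ≠ 0) :
    ∃ c : ℂ, star (c • v) ⬝ᵥ (c • v) = 1 := by
  have hw : WithLp.toLp 2 v ≠ 0 := by simpa using hv
  refine ⟨(‖WithLp.toLp 2 v‖⁻¹ : ℝ), ?_⟩
  have h1 : ‖((‖WithLp.toLp 2 v‖⁻¹ : ℝ) : ℂ) • WithLp.toLp 2 v‖ = 1 := by
    simpa using norm_smul_inv_norm (𝕜 := ℂ) hw
  have h2 := inner_self_eq_norm_sq_to_K (𝕜 := ℂ)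
    (((‖WithLp.toLp 2 v‖⁻¹ : ℝ) : ℂ) • WithLp.toLp 2 v)
  rw [h1, EuclideanSpace.inner_eq_star_dotProduct, dotProduct_comm] at h2
  simpa using h2

theorem conjTranspose_vecMulVec_mul_mul {A B : Type*} [Fintype A] [DecidableEq B]
    (u w : A → ℂ) (M : Matrix A A ℂ) (h h' : B) :
    (Matrix.vecMulVec u (Pi.single h (1 : ℂ)))ᴴ * M * Matrix.vecMulVec w (Pi.single h' (1 : ℂ)) =
      (star u ⬝ᵥ M *ᵥ w) • Matrix.single h h' (1 : ℂ) := by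
  rw [Matrix.conjTranspose_vecMulVec, Matrix.vecMulVec_mul, Matrix.vecMulVec_mul_vecMulVec,
    ← Matrix.dotProduct_mulVec]
  ext i j
  by_cases hi : h = i <;> by_cases hj : h' = j <;>
    simp [Matrix.vecMulVec_apply, hi, hj]

theorem cohom_from_graph_iff
    {r : ℕ} {V : Fin r → Type} [∀ d, Fintype (V d)] [∀ d, DecidableEq (V d)]
    (G : ∀ d, SimpleGraph (V d))
    {VH : Type} [Fintype VH] [DecidableEq VH] (H : SimpleGraph VH) :
    Cohom (graphNC H) (bigSum G) ↔
      ∃ (φ : VH → Σ d, V d) (u : ∀ h : VH, Fin ((φ h).1.1 + 1) → ℂ),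
        (∀ h, star (u h) ⬝ᵥ u h = 1) ∧
        ∀ h h', h ≠ h' → ¬ H.Adj h h' →
          (¬ SimRel G (φ h) (φ h') ∨
            ∀ e : (φ h).1 = (φ h').1,
              star (u h) ⬝ᵥ
                (fun i => u h' (Fin.cast (congrArg (fun d : Fin r => d.1 + 1) e) i)) = 0) := by
  constructor
  · rintro ⟨k, E, hsum, hE⟩
    have hcol : ∀ h, ∃ i, ∃ p : Σ d, V d, (fun a => E i (blockIndex p a) h) ≠ 0 := by
      intro h
      by_contra! hzero
      have hhh := congrFun (congrFun hsum h) h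
      rw [Matrix.sum_apply, Finset.sum_eq_zero, Matrix.one_apply_eq] at hhh
      · exact zero_ne_one hhh
      · refine fun i _ => Finset.sum_eq_zero fun s _ => ?_
        have hs : E i s h = 0 := congrFun (hzero i ⟨s.1, s.2.1⟩) s.2.2
        simp only [hs, mul_zero]
    choose i φ hne using hcol
    choose c hc using fun h => exists_smul_unit (hne h)
    refine ⟨φ, fun h => c h • fun a => E (i h) (blockIndex (φ h) a) h, hc,
      fun h h' hhh' hadj => or_iff_not_imp_left.2 fun hsim e => ?_⟩
    have key := star_dotProduct_eq_zero_of_mem (hE (i h) (i h')) hhh' hadj (not_not.1 hsim) e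
    refine Eq.trans ?_ (mul_eq_zero_of_right (star (c h) * c h') key)
    simp only [dotProduct, Finset.mul_sum, Pi.star_apply, Pi.smul_apply, smul_eq_mul, star_mul]
    exact Finset.sum_congr rfl fun a _ => by ring
  · rintro ⟨φ, u, hu, horth⟩
    let E : VH → Matrix (Σ d : Fin r, V d × Fin (d.1 + 1)) VH ℂ :=
      fun h => Matrix.vecMulVec (blockVec (φ h) (u h)) (Pi.single h 1)
    refine ⟨Fintype.card VH, fun i => E ((Fintype.equivFin VH).symm i), ?_, fun i j M hM => ?_⟩
    · rw [(Fintype.equivFin VH).symm.sum_comp fun h => (E h)ᴴ * E h]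
      have hEE : ∀ h, (E h)ᴴ * E h = Matrix.single h h 1 := fun h => by
        have := conjTranspose_vecMulVec_mul_mul (blockVec (φ h) (u h)) (blockVec (φ h) (u h)) 1 h h
        rwa [Matrix.mul_one, Matrix.one_mulVec, star_blockVec_dotProduct_self, hu, one_smul] at this
      simp_rw [hEE]
      ext x y
      simp [Matrix.sum_apply, Matrix.single_apply, Matrix.one_apply, ite_and]
    · simp only [E]
      rw [conjTranspose_vecMulVec_mul_mul]
      generalize (Fintype.equivFin VH).symm i = h
      generalize (Fintype.equivFin VH).symm j = h'
      by_cases hadj : H.Adj h h' ∨ h = h'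
      · exact Submodule.smul_mem _ _ (Submodule.subset_span ⟨h, h', hadj, rfl⟩)
      · rw [not_or] at hadj
        rw [star_blockVec_dotProduct_mulVec_eq_zero hM _ _ _ _ (horth h h' hadj.2 hadj.1), zero_smul]
        exact Submodule.zero_mem _


end NCG
end

section
/- Let G be a finite simple graph, d ≥ 1 an integer with ξ(G) ≤ d (where ξ is the orthogonal rank), and suppose G contains M pairwise disjoint cliques of size d. Then Δ_{Md} ≤ Ḡ ⊗ Q_d, i.e. there is a cohomomorphism from the diagonal noncommutative graph Δ_{Md} to Ḡ ⊗ Q_d. -/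
open scoped Kronecker
open Matrix

namespace NCG

/-- `Δ_m`: the diagonal noncommutative graph (confusability graph of the noiseless
classical channel with `m` inputs). -/
noncomputable def diagNC (m : ℕ) : Submodule ℂ (Matrix (Fin m) (Fin m) ℂ) :=
  Submodule.span ℂ {M | ∃ i : Fin m, M = Matrix.single i i 1}

theorem mem_diagNC_of_isDiag {m : ℕ} {X : Matrix (Fin m) (Fin m) ℂ} (hX : X.IsDiag) :
    X ∈ diagNC m := by
  have hsum : X = ∑ i, X i i • Matrix.single i i (1 : ℂ) := by
    ext a b
    rw [Matrix.sum_apply]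
    by_cases hab : a = b
    · subst hab
      simp [Matrix.single_apply]
    · rw [hX hab, eq_comm]
      refine Finset.sum_eq_zero fun i _ => ?_
      have hne : ¬(i = a ∧ i = b) := fun h => hab (h.1.symm.trans h.2)
      simp [hne]
  rw [hsum]
  exact Submodule.sum_mem _ fun i _ =>
    Submodule.smul_mem _ _ (Submodule.subset_span ⟨i, rfl⟩)

theorem apply_eq_zero_of_mem_graphNC {V : Type} [Fintype V] [DecidableEq V] {G : SimpleGraph V}
    {A : Matrix V V ℂ} (hA : A ∈ graphNC G) {x y : V} (hne : x ≠ y) (hadj : ¬G.Adj x y) :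
    A x y = 0 := by
  induction hA using Submodule.span_induction with
  | mem B hB =>
    obtain ⟨a, b, hab, rfl⟩ := hB
    have hxy : ¬(a = x ∧ b = y) := by
      rintro ⟨rfl, rfl⟩
      exact hab.elim hadj hne
    simp [hxy]
  | zero => rfl
  | add B B' _ _ hB hB' => simp [hB, hB']
  | smul c B _ hB => simp [hB]

theorem exists_eq_kronecker_one_of_mem_ncTensor_qGraph {A : Type} [Fintype A] [DecidableEq A]
    {d : ℕ} {S : Submodule ℂ (Matrix A A ℂ)} {N : Matrix (A × Fin d) (A × Fin d) ℂ}
    (hN : N ∈ ncTensor S (qGraph d)) :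
    ∃ X ∈ S, N = X ⊗ₖ (1 : Matrix (Fin d) (Fin d) ℂ) := by
  induction hN using Submodule.span_induction with
  | mem B hB =>
    obtain ⟨X, hX, Y, hY, rfl⟩ := hB
    obtain ⟨c, rfl⟩ := Submodule.mem_span_singleton.mp hY
    exact ⟨c • X, S.smul_mem c hX, by rw [Matrix.kronecker_smul, Matrix.smul_kronecker]⟩
  | zero => exact ⟨0, S.zero_mem, by simp⟩
  | add B B' _ _ hB hB' =>
    obtain ⟨X, hX, rfl⟩ := hB
    obtain ⟨X', hX', rfl⟩ := hB'
    exact ⟨X + X', S.add_mem hX hX', by rw [Matrix.add_kronecker]⟩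
  | smul c B _ hB =>
    obtain ⟨X, hX, rfl⟩ := hB
    exact ⟨c • X, S.smul_mem c hX, by rw [Matrix.smul_kronecker]⟩

/-- The matrix with columns `|f b⟩ ⊗ u (f b)`. -/
def vertexEncoding {V B : Type} [DecidableEq V] {d : ℕ} (u : V → Fin d → ℂ) (f : B → V) :
    Matrix (V × Fin d) B ℂ :=
  Matrix.of fun p b => if p.1 = f b then u p.1 p.2 else 0

theorem vertexEncoding_conjTranspose_mul_kronecker_one_mul_apply {V B : Type} [Fintype V]
    [DecidableEq V] {d : ℕ} (u : V → Fin d → ℂ) (f : B → V) (A : Matrix V V ℂ) (b b' : B) :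
    ((vertexEncoding u f)ᴴ * (A ⊗ₖ (1 : Matrix (Fin d) (Fin d) ℂ)) * vertexEncoding u f) b b' =
      A (f b) (f b') * (star (u (f b)) ⬝ᵥ u (f b')) := by
  simp [Matrix.mul_apply, vertexEncoding, Fintype.sum_prod_type, Matrix.one_apply, dotProduct,
    Finset.mul_sum, apply_ite (starRingEnd ℂ), ite_mul, mul_ite]
  exact Finset.sum_congr rfl fun _ _ => by ring

/-- An orthogonal representation of `G` in `ℂ^d` lets any family of distinct vertices be
transmitted perfectly through `Ḡ ⊗ Q_d`. -/
theorem cohom_diagNC_of_injective {V : Type} [Fintype V] [DecidableEq V] {G : SimpleGraph V}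
    {d m : ℕ} {u : V → Fin d → ℂ} (hunit : ∀ g, star (u g) ⬝ᵥ u g = 1)
    (horth : ∀ g g', G.Adj g g' → star (u g) ⬝ᵥ u g' = 0)
    {f : Fin m → V} (hf : Function.Injective f) :
    Cohom (diagNC m) (ncTensor (graphNC G) (qGraph d)) := by
  refine ⟨1, fun _ => vertexEncoding u f, ?_, fun _ _ N hN => ?_⟩
  · ext b b'
    have h := vertexEncoding_conjTranspose_mul_kronecker_one_mul_apply u f 1 b b'
    rw [Matrix.one_kronecker_one, Matrix.mul_one] at h
    rw [Finset.univ_unique, Finset.sum_singleton, h]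
    by_cases hbb : b = b'
    · subst hbb
      simp [hunit]
    · simp [Matrix.one_apply_ne hbb, Matrix.one_apply_ne (hf.ne hbb)]
  · obtain ⟨A, hA, rfl⟩ := exists_eq_kronecker_one_of_mem_ncTensor_qGraph hN
    refine mem_diagNC_of_isDiag fun b b' hbb => ?_
    refine (vertexEncoding_conjTranspose_mul_kronecker_one_mul_apply u f A b b').trans ?_
    by_cases hadj : G.Adj (f b) (f b')
    · rw [horth _ _ hadj, mul_zero]
    · rw [apply_eq_zero_of_mem_graphNC hA (hf.ne hbb) hadj, zero_mul]

theorem disjoint_cliques_cohom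
    {V : Type} [Fintype V] [DecidableEq V] (G : SimpleGraph V)
    (d : ℕ) (hd : 1 ≤ d)
    (hxi : ∃ u : V → Fin d → ℂ, (∀ g, star (u g) ⬝ᵥ u g = 1) ∧
      ∀ g g', G.Adj g g' → star (u g) ⬝ᵥ u g' = 0)
    (M : ℕ) (C : Fin M → Finset V)
    (hclique : ∀ i, G.IsClique (C i : Set V))
    (hcard : ∀ i, (C i).card = d)
    (hdisj : ∀ i j, i ≠ j → Disjoint (C i) (C j)) :
    Cohom (diagNC (M * d)) (ncTensor (graphNC G) (qGraph d)) := by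
  obtain ⟨u, hunit, horth⟩ := hxi
  have hle : Fintype.card (Fin (M * d)) ≤ Fintype.card V := by
    calc Fintype.card (Fin (M * d)) = (Finset.univ.biUnion C).card := by
          rw [Finset.card_biUnion fun i _ j _ hij => hdisj i j hij]
          simp [hcard]
      _ ≤ Fintype.card V := Finset.card_le_univ _
  obtain ⟨f⟩ := Function.Embedding.nonempty_of_card_le hle
  exact cohom_diagNC_of_injective hunit horth f.injective


end NCG
end
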